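/- For every real t ≥ 1, ∫_0^1 ln(1−x) / ( (x + t) √(x(1−x)) ) dx = π · ln( (t+1) / (√t + √(t+1))² ) / √(t(t+1)). -/

import Mathlib

/-!
The substitution `x = u² / (1 + u²)` turns the integral into
`-2 / (t + 1) * ∫_0^∞ log (1 + u²) / (u² + a²) du` with `a = √t / √(t + 1) ∈ (0, 1)`.
This integral equals `π / a * log (1 + a)`: write
`log (1 + u²) = ∫_0^1 2 s u² / (1 + s² u²) ds`, exchange the two integrals (the integrand is
nonnegative), compute the `u`-integral by partial fractions to get `π / (1 + a s)`, and
integrate over `s ∈ (0, 1]`. Since `a < 1`, the factor `1 - a² s²` of the partial fraction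
decomposition never vanishes. Finally `(t + 1) / (√t + √(t + 1))² = (1 + a)⁻²`.
-/

open MeasureTheory Set Filter Topology

/-- The integrand of the double integral over `(s, u)` that equals
`∫_0^∞ log (1 + u²) / (u² + a²) du`. -/
noncomputable def kern (a s u : ℝ) : ℝ :=
  2 * s * u ^ 2 / ((1 + s ^ 2 * u ^ 2) * (u ^ 2 + a ^ 2))

lemma kern_nonneg {a s u : ℝ} (hs : 0 ≤ s) : 0 ≤ kern a s u := by
  unfold kern; positivity

lemma kern_continuous {a : ℝ} (ha : 0 < a) :
    Continuous (Function.uncurry (kern a)) := by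
  unfold kern Function.uncurry
  refine Continuous.div (by fun_prop) (by fun_prop) fun p => ?_
  positivity

/-- An antiderivative in `u` found by partial fractions. -/
lemma kern_hasDerivAt {a s : ℝ} (ha : 0 < a) (ha1 : a < 1) (hs : 0 < s) (hs1 : s ≤ 1)
    (u : ℝ) :
    HasDerivAt (fun u => 2 / (1 - a ^ 2 * s ^ 2) *
      (Real.arctan (s * u) - a * s * Real.arctan (u / a))) (kern a s u) u := by
  have h1 : HasDerivAt (fun u => Real.arctan (s * u)) (1 / (1 + (s * u) ^ 2) * (s * 1)) u :=
    ((hasDerivAt_id u).const_mul s).arctan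
  have h2 : HasDerivAt (fun u => Real.arctan (u / a)) (1 / (1 + (u / a) ^ 2) * (1 / a)) u :=
    ((hasDerivAt_id u).div_const a).arctan
  refine ((h1.sub (h2.const_mul (a * s))).const_mul (2 / (1 - a ^ 2 * s ^ 2))).congr_deriv ?_
  have has : a * s < 1 := by nlinarith
  have h0 : 1 - a ^ 2 * s ^ 2 ≠ 0 := by nlinarith [mul_pos ha hs]
  have e1 : 1 + (s * u) ^ 2 = 1 + s ^ 2 * u ^ 2 := by ring
  have e2 : 1 / (1 + (u / a) ^ 2) * (1 / a) = a / (u ^ 2 + a ^ 2) := by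
    have : 1 + (u / a) ^ 2 = (u ^ 2 + a ^ 2) / a ^ 2 := by field_simp; ring
    rw [this]; field_simp
  have p1 : 1 + s ^ 2 * u ^ 2 ≠ 0 := by positivity
  have p2 : u ^ 2 + a ^ 2 ≠ 0 := by positivity
  rw [e1, e2, kern]
  field_simp
  ring

lemma kern_tendsto {a s : ℝ} (ha : 0 < a) (ha1 : a < 1) (hs : 0 < s) (hs1 : s ≤ 1) :
    Tendsto (fun u => 2 / (1 - a ^ 2 * s ^ 2) *
      (Real.arctan (s * u) - a * s * Real.arctan (u / a))) atTop
      (𝓝 (Real.pi / (1 + a * s))) := by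
  have harc : Tendsto Real.arctan atTop (𝓝 (Real.pi / 2)) :=
    Real.tendsto_arctan_atTop.mono_right nhdsWithin_le_nhds
  have h1 := harc.comp (tendsto_id.const_mul_atTop hs)
  have h2 := harc.comp (tendsto_id.atTop_div_const ha)
  have h := (h1.sub (h2.const_mul (a * s))).const_mul (2 / (1 - a ^ 2 * s ^ 2))
  refine h.trans (le_of_eq (congrArg 𝓝 ?_))
  have has : a * s < 1 := by nlinarith
  have h0 : 1 - a ^ 2 * s ^ 2 ≠ 0 := by nlinarith [mul_pos ha hs]
  have h3 : 1 + a * s ≠ 0 := by positivity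
  field_simp
  ring

lemma kern_integrable {a s : ℝ} (ha : 0 < a) (ha1 : a < 1) (hs : 0 < s) (hs1 : s ≤ 1) :
    IntegrableOn (kern a s) (Ioi 0) :=
  integrableOn_Ioi_deriv_of_nonneg' (fun u _ => kern_hasDerivAt ha ha1 hs hs1 u)
    (fun _ _ => kern_nonneg hs.le) (kern_tendsto ha ha1 hs hs1)

lemma kern_integral {a s : ℝ} (ha : 0 < a) (ha1 : a < 1) (hs : 0 < s) (hs1 : s ≤ 1) :
    ∫ u in Ioi 0, kern a s u = Real.pi / (1 + a * s) := by
  rw [integral_Ioi_of_hasDerivAt_of_nonneg' (fun u _ => kern_hasDerivAt ha ha1 hs hs1 u)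
    (fun _ _ => kern_nonneg hs.le) (kern_tendsto ha ha1 hs hs1)]
  simp

lemma kern_integral_left {a : ℝ} (ha : 0 < a) (u : ℝ) :
    ∫ s in Ioc 0 1, kern a s u = Real.log (1 + u ^ 2) / (u ^ 2 + a ^ 2) := by
  rw [← intervalIntegral.integral_of_le zero_le_one]
  have hd : ∀ s ∈ uIcc (0 : ℝ) 1,
      HasDerivAt (fun s => Real.log (1 + s ^ 2 * u ^ 2) / (u ^ 2 + a ^ 2)) (kern a s u) s := by
    intro s _
    have p1 : 1 + s ^ 2 * u ^ 2 ≠ 0 := by positivity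
    have h := ((((hasDerivAt_pow 2 s).mul_const (u ^ 2)).const_add 1).log p1).div_const
      (u ^ 2 + a ^ 2)
    refine h.congr_deriv ?_
    rw [kern, div_div]
    norm_num
  have hc : Continuous fun s => kern a s u :=
    (kern_continuous ha).comp (by fun_prop : Continuous fun s : ℝ => (s, u))
  rw [intervalIntegral.integral_eq_sub_of_hasDerivAt hd (hc.intervalIntegrable _ _)]
  simp

lemma integral_pi_div {a : ℝ} (ha : 0 < a) :
    ∫ s in Ioc 0 1, Real.pi / (1 + a * s) = Real.pi / a * Real.log (1 + a) := by
  rw [← intervalIntegral.integral_of_le zero_le_one]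
  have hp : ∀ s ∈ uIcc (0 : ℝ) 1, 1 + a * s ≠ 0 := by
    intro s hs
    rw [uIcc_of_le zero_le_one] at hs
    have := mul_nonneg ha.le hs.1
    positivity
  have hd : ∀ s ∈ uIcc (0 : ℝ) 1,
      HasDerivAt (fun s => Real.pi / a * Real.log (1 + a * s)) (Real.pi / (1 + a * s)) s := by
    intro s hs
    have p := hp s hs
    have h := ((((hasDerivAt_id s).const_mul a).const_add 1).log p).const_mul (Real.pi / a)
    refine h.congr_deriv ?_
    rw [id]
    field_simp
  have hc : ContinuousOn (fun s => Real.pi / (1 + a * s)) (uIcc (0 : ℝ) 1) :=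
    ContinuousOn.div (by fun_prop) (by fun_prop) hp
  rw [intervalIntegral.integral_eq_sub_of_hasDerivAt hd hc.intervalIntegrable]
  simp

lemma integral_log_div {a : ℝ} (ha : 0 < a) (ha1 : a < 1) :
    ∫ u in Ioi (0 : ℝ), Real.log (1 + u ^ 2) / (u ^ 2 + a ^ 2) =
      Real.pi / a * Real.log (1 + a) := by
  have hint : Integrable (Function.uncurry (kern a))
      ((volume.restrict (Ioc (0 : ℝ) 1)).prod (volume.restrict (Ioi (0 : ℝ)))) := by
    rw [integrable_prod_iff (kern_continuous ha).aestronglyMeasurable]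
    constructor
    · filter_upwards [ae_restrict_mem measurableSet_Ioc] with s hs
      exact kern_integrable ha ha1 hs.1 hs.2
    · have hc : IntegrableOn (fun s => Real.pi / (1 + a * s)) (Ioc (0 : ℝ) 1) := by
        refine (ContinuousOn.integrableOn_Icc ?_).mono_set Ioc_subset_Icc_self
        refine ContinuousOn.div (by fun_prop) (by fun_prop) fun s hs => ?_
        have := mul_nonneg ha.le hs.1
        positivity
      refine hc.congr ?_
      filter_upwards [ae_restrict_mem measurableSet_Ioc] with s hs
      rw [← kern_integral ha ha1 hs.1 hs.2]
      refine integral_congr_ae (Eventually.of_forall fun u => ?_)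
      exact (Real.norm_of_nonneg (kern_nonneg hs.1.le)).symm
  calc ∫ u in Ioi (0 : ℝ), Real.log (1 + u ^ 2) / (u ^ 2 + a ^ 2)
      = ∫ u in Ioi (0 : ℝ), ∫ s in Ioc (0 : ℝ) 1, kern a s u := by
        simp_rw [kern_integral_left ha]
    _ = ∫ s in Ioc (0 : ℝ) 1, ∫ u in Ioi (0 : ℝ), kern a s u :=
        (integral_integral_swap hint).symm
    _ = ∫ s in Ioc (0 : ℝ) 1, Real.pi / (1 + a * s) :=
        setIntegral_congr_fun measurableSet_Ioc fun s hs => kern_integral ha ha1 hs.1 hs.2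
    _ = _ := integral_pi_div ha

lemma image_subst : (fun u : ℝ => u ^ 2 / (1 + u ^ 2)) '' Ioi 0 = Ioo 0 1 := by
  ext x
  constructor
  · rintro ⟨u, hu, rfl⟩
    have hu : 0 < u := hu
    refine ⟨by positivity, ?_⟩
    change u ^ 2 / (1 + u ^ 2) < 1
    rw [div_lt_one (by positivity)]
    linarith
  · rintro ⟨h0, h1⟩
    have h1' : 0 < 1 - x := by linarith
    refine ⟨√(x / (1 - x)), Real.sqrt_pos.2 (div_pos h0 h1'), ?_⟩
    change √(x / (1 - x)) ^ 2 / (1 + √(x / (1 - x)) ^ 2) = x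
    rw [Real.sq_sqrt (div_pos h0 h1').le]
    field_simp
    ring

lemma injOn_subst : InjOn (fun u : ℝ => u ^ 2 / (1 + u ^ 2)) (Ioi 0) := by
  intro u hu v hv h
  have hu : 0 < u := hu
  have hv : 0 < v := hv
  have h : u ^ 2 / (1 + u ^ 2) = v ^ 2 / (1 + v ^ 2) := h
  rw [div_eq_div_iff (by positivity) (by positivity)] at h
  exact (sq_eq_sq₀ hu.le hv.le).1 (by linarith)

lemma hasDerivAt_subst (u : ℝ) :
    HasDerivAt (fun u : ℝ => u ^ 2 / (1 + u ^ 2)) (2 * u / (1 + u ^ 2) ^ 2) u := by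
  have p : 1 + u ^ 2 ≠ 0 := by positivity
  refine ((hasDerivAt_pow 2 u).div ((hasDerivAt_pow 2 u).const_add 1) p).congr_deriv ?_
  norm_num
  ring

/-- For `t ≥ 1`, `∫_0^1 ln(1-x)/((x+t)√(x(1-x))) dx = π ln((t+1)/(√t+√(t+1))²)/√(t(t+1))`. -/
theorem integral_log_shifted_sqrt (t : ℝ) (ht : 1 ≤ t) :
    (∫ x in (0 : ℝ)..1, Real.log (1 - x) / ((x + t) * Real.sqrt (x * (1 - x)))) =
      Real.pi * Real.log ((t + 1) / (Real.sqrt t + Real.sqrt (t + 1)) ^ 2) /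
        Real.sqrt (t * (t + 1)) := by
  have ht0 : 0 < t := by linarith
  have hb : 0 < √(t + 1) := Real.sqrt_pos.2 (by linarith)
  have hc : 0 < √t := Real.sqrt_pos.2 ht0
  have hb2 : √(t + 1) ^ 2 = t + 1 := Real.sq_sqrt (by linarith)
  have hc2 : √t ^ 2 = t := Real.sq_sqrt ht0.le
  obtain ⟨a, hadef⟩ : ∃ a, a = √t / √(t + 1) := ⟨_, rfl⟩
  have ha : 0 < a := hadef ▸ div_pos hc hb
  have ha1 : a < 1 := by
    rw [hadef, div_lt_one hb]
    exact Real.sqrt_lt_sqrt ht0.le (by linarith)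
  have ha2 : (t + 1) * a ^ 2 = t := by
    rw [hadef, div_pow, hb2, hc2]; field_simp
  rw [intervalIntegral.integral_of_le zero_le_one, integral_Ioc_eq_integral_Ioo, ← image_subst,
    integral_image_eq_integral_abs_deriv_smul measurableSet_Ioi
      (fun u _ => (hasDerivAt_subst u).hasDerivWithinAt) injOn_subst]
  have key : ∀ u ∈ Ioi (0 : ℝ), |2 * u / (1 + u ^ 2) ^ 2| •
      (Real.log (1 - u ^ 2 / (1 + u ^ 2)) / ((u ^ 2 / (1 + u ^ 2) + t) *
        √(u ^ 2 / (1 + u ^ 2) * (1 - u ^ 2 / (1 + u ^ 2))))) =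
      (-2 / (t + 1)) * (Real.log (1 + u ^ 2) / (u ^ 2 + a ^ 2)) := by
    intro u hu
    have hu : 0 < u := hu
    have e1 : 1 - u ^ 2 / (1 + u ^ 2) = (1 + u ^ 2)⁻¹ := by field_simp; ring
    have e2 : u ^ 2 / (1 + u ^ 2) * (1 + u ^ 2)⁻¹ = (u / (1 + u ^ 2)) ^ 2 := by field_simp
    have e3 : u ^ 2 / (1 + u ^ 2) + t = (t + 1) * (u ^ 2 + a ^ 2) / (1 + u ^ 2) := by
      rw [mul_add, ha2]; field_simp; ring
    rw [e1, e2, e3, Real.sqrt_sq (by positivity), Real.log_inv, abs_of_pos (by positivity),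
      smul_eq_mul]
    field_simp
  rw [setIntegral_congr_fun measurableSet_Ioi key, integral_const_mul, integral_log_div ha ha1]
  have e4 : (t + 1) / (√t + √(t + 1)) ^ 2 = ((1 + a) ^ 2)⁻¹ := by
    have : √t = a * √(t + 1) := by rw [hadef]; field_simp
    rw [this, show a * √(t + 1) + √(t + 1) = (1 + a) * √(t + 1) by ring, mul_pow, hb2]
    field_simp
  have e5 : √(t * (t + 1)) = (t + 1) * a := by
    rw [Real.sqrt_mul ht0.le, hadef]
    nth_rewrite 2 [← hb2]
    field_simp
  rw [e4, e5, Real.log_inv, Real.log_pow]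
  push_cast
  field_simp
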